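/- Let ε > 0 and define Q : ℝ → ℝ by Q(x) = e^{−|x|^{2+ε}/(2+ε)} ∫₀^x e^{|t|^{2+ε}/(2+ε)} dt. Then x^{1+ε/2}·Q(x) → 0 as x → +∞ and as x → −∞, and consequently Q is Lebesgue integrable on ℝ. -/

import Mathlib

open Set Filter MeasureTheory

noncomputable section

/-- The Feller function `Q` for the operator `ψ'' − x|x|^ε ψ'`. -/
noncomputable def fellerQ (ε : ℝ) (x : ℝ) : ℝ :=
  Real.exp (-|x| ^ (2 + ε) / (2 + ε)) * ∫ t in (0:ℝ)..x, Real.exp (|t| ^ (2 + ε) / (2 + ε))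

theorem fellerQ_neg (ε x : ℝ) : fellerQ ε (-x) = - fellerQ ε x := by
  have h := intervalIntegral.integral_comp_neg (a := 0) (b := x)
    (fun t : ℝ => Real.exp (|t| ^ (2 + ε) / (2 + ε)))
  simp only [abs_neg, neg_zero] at h
  unfold fellerQ
  rw [abs_neg, intervalIntegral.integral_symm, ← h]
  ring

theorem fellerQ_cont_aux (ε : ℝ) (hε : 0 < ε) :
    Continuous (fun t : ℝ => Real.exp (|t| ^ (2 + ε) / (2 + ε))) := by
  have : Continuous (fun t : ℝ => |t| ^ (2 + ε)) :=
    continuous_abs.rpow_const (fun _ => Or.inr (by linarith))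
  fun_prop

theorem fellerQ_continuous (ε : ℝ) (hε : 0 < ε) : Continuous (fellerQ ε) := by
  have h1 : Continuous (fun t : ℝ => |t| ^ (2 + ε)) :=
    continuous_abs.rpow_const (fun _ => Or.inr (by linarith))
  have h2 : Continuous (fun x : ℝ => ∫ t in (0:ℝ)..x, Real.exp (|t| ^ (2 + ε) / (2 + ε))) :=
    intervalIntegral.continuous_primitive
      (fun a b => (fellerQ_cont_aux ε hε).intervalIntegrable a b) 0
  unfold fellerQ
  fun_prop

theorem fellerQ_nonneg (ε x : ℝ) (hx : 0 < x) : 0 ≤ fellerQ ε x := by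
  unfold fellerQ
  exact mul_nonneg (Real.exp_pos _).le
    (intervalIntegral.integral_nonneg hx.le (fun _ _ => (Real.exp_pos _).le))

theorem fellerQ_le (ε x : ℝ) (hε : 0 < ε) (hx : 0 < x) :
    fellerQ ε x ≤ (2 + ε) * x ^ (-(1 + ε)) := by
  have hp : 0 < 2 + ε := by linarith
  set c : ℝ := x ^ (1 + ε) / (2 + ε) with hc
  have hxp : 0 < x ^ (1 + ε) := Real.rpow_pos_of_pos hx _
  have hc0 : 0 < c := by positivity
  have hsplit : ∀ t : ℝ, 0 ≤ t → t ^ (2 + ε) = t ^ (1 + ε) * t := by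
    intro t ht
    rw [← Real.rpow_add_one' ht (by linarith)]
    congr 1; ring
  have hI : (∫ t in (0:ℝ)..x, Real.exp (|t| ^ (2 + ε) / (2 + ε)))
      ≤ ∫ t in (0:ℝ)..x, Real.exp (c * t) := by
    apply intervalIntegral.integral_mono_on hx.le
      ((fellerQ_cont_aux ε hε).intervalIntegrable _ _)
      ((by fun_prop : Continuous (fun t : ℝ => Real.exp (c * t))).intervalIntegrable _ _)
    intro t ht
    apply Real.exp_le_exp.2
    rw [abs_of_nonneg ht.1, hsplit t ht.1, hc, div_mul_eq_mul_div]
    have := Real.rpow_le_rpow ht.1 ht.2 (by linarith : 0 ≤ 1 + ε)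
    have := ht.1
    gcongr
  have hE : (∫ t in (0:ℝ)..x, Real.exp (c * t)) = (Real.exp (c * x) - 1) / c := by
    rw [intervalIntegral.integral_comp_mul_left _ hc0.ne', integral_exp]
    simp [div_eq_inv_mul]
  have hcx : -|x| ^ (2 + ε) / (2 + ε) = -(c * x) := by
    rw [abs_of_pos hx, hsplit x hx.le, hc]; ring
  have hinv : (2 + ε) * x ^ (-(1 + ε)) = 1 / c := by
    rw [Real.rpow_neg hx.le, hc]; field_simp
  unfold fellerQ
  rw [hcx, hinv]
  calc _ ≤ Real.exp (-(c * x)) * ((Real.exp (c * x) - 1) / c) := by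
        rw [← hE]; gcongr
    _ = (1 - Real.exp (-(c * x))) / c := by
        rw [mul_div_assoc', mul_sub, ← Real.exp_add]; simp
    _ ≤ 1 / c := by
        have := Real.exp_pos (-(c * x))
        gcongr; linarith

theorem fellerQ_top (ε : ℝ) (hε : 0 < ε) :
    Tendsto (fun x : ℝ => |x| ^ ((1:ℝ) + ε / 2) * fellerQ ε x) atTop (nhds 0) := by
  have h0 : Tendsto (fun x : ℝ => (2 + ε) * x ^ (-(ε / 2))) atTop (nhds 0) := by
    simpa using (tendsto_rpow_neg_atTop (by linarith : 0 < ε / 2)).const_mul (2 + ε)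
  refine tendsto_of_tendsto_of_tendsto_of_le_of_le' tendsto_const_nhds h0 ?_ ?_
  · filter_upwards [eventually_gt_atTop 0] with x hx
    exact mul_nonneg (by positivity) (fellerQ_nonneg ε x hx)
  · filter_upwards [eventually_gt_atTop 0] with x hx
    rw [abs_of_pos hx]
    calc _ ≤ x ^ ((1:ℝ) + ε / 2) * ((2 + ε) * x ^ (-(1 + ε))) := by
          gcongr; exact fellerQ_le ε x hε hx
      _ = (2 + ε) * (x ^ ((1:ℝ) + ε / 2) * x ^ (-(1 + ε))) := by ring
      _ = _ := by rw [← Real.rpow_add hx]; congr 2; ring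

/-- `|x|^{1+ε/2}·Q(x) → 0` as `x → ±∞`, and `Q` is Lebesgue integrable on `ℝ`. -/
theorem fellerQ_decay_and_integrable (ε : ℝ) (hε : 0 < ε) :
    Tendsto (fun x : ℝ => |x| ^ ((1:ℝ) + ε / 2) * fellerQ ε x) atTop (nhds 0) ∧
    Tendsto (fun x : ℝ => |x| ^ ((1:ℝ) + ε / 2) * fellerQ ε x) atBot (nhds 0) ∧
    Integrable (fellerQ ε) volume := by
  refine ⟨fellerQ_top ε hε, ?_, ?_⟩
  · have h := ((fellerQ_top ε hε).comp tendsto_neg_atBot_atTop).neg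
    simpa [Function.comp_def, fellerQ_neg] using h
  · refine (fellerQ_continuous ε hε).locallyIntegrable.integrable_of_isBigO_atTop_of_norm_isNegInvariant
      (g := fun x : ℝ => x ^ (-(1 + ε))) ?_ ?_ ?_
    · exact Eventually.of_forall fun x => by simp [fellerQ_neg]
    · refine Asymptotics.IsBigO.of_bound (2 + ε) ?_
      filter_upwards [eventually_gt_atTop 0] with x hx
      rw [Real.norm_of_nonneg (fellerQ_nonneg ε x hx),
        Real.norm_of_nonneg (Real.rpow_nonneg hx.le _)]
      exact fellerQ_le ε x hε hx
    · exact ⟨Ioi 1, Ioi_mem_atTop 1,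
        integrableOn_Ioi_rpow_of_lt (by linarith) one_pos⟩
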